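/- The set of G-invariant elements of R′ is a commutative subring of R′: any two elements of R′ fixed by G commute with each other. -/

import Mathlib

open Finset

/-- The free algebra `P = K⟨x_1, x_2, x_3⟩` (generators indexed by `Fin 3`). -/
noncomputable abbrev P3 (K : Type*) [Field K] := FreeAlgebra K (Fin 3)

/-- The generators `x_1, x_2, x_3` of `P` (zero-based: `x3 K 0 = x_1`, etc.). -/
noncomputable def x3 (K : Type*) [Field K] (i : Fin 3) : P3 K := FreeAlgebra.ι K i

/-- The elementary polynomials `σ_1 = x_1+x_2+x_3`, `σ_2 = x_1x_2+x_1x_3+x_2x_3`,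
`σ_3 = x_1x_2x_3` (zero-based indexing: `sig3 K 0 = σ_1`, etc.). -/
noncomputable def sig3 (K : Type*) [Field K] : Fin 3 → P3 K :=
  ![x3 K 0 + x3 K 1 + x3 K 2,
    x3 K 0 * x3 K 1 + x3 K 0 * x3 K 2 + x3 K 1 * x3 K 2,
    x3 K 0 * x3 K 1 * x3 K 2]

/-- The relation identifying `x_i * σ_k` with `σ_k * x_i`; the quotient
`R′ = P/I` by the two-sided ideal `I` generated by the commutators `[x_i, σ_k]`
is `RingQuot` of this relation. -/
noncomputable def rel3 (K : Type*) [Field K] : P3 K → P3 K → Prop :=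
  fun a b => ∃ i k : Fin 3, a = x3 K i * sig3 K k ∧ b = sig3 K k * x3 K i

/-- The quotient ring `R′ = P/I`. -/
noncomputable abbrev R3 (K : Type*) [Field K] := RingQuot (rel3 K)

/-- The quotient map `P → R′`. -/
noncomputable def mk3 (K : Type*) [Field K] : P3 K →ₐ[K] R3 K :=
  RingQuot.mkAlgHom K (rel3 K)

/-- The image in `R′` of the generator `x_i`. -/
noncomputable def X3 (K : Type*) [Field K] (i : Fin 3) : R3 K := mk3 K (x3 K i)

/-- The image in `R′` of `σ_k`. -/
noncomputable def S3 (K : Type*) [Field K] (k : Fin 3) : R3 K := mk3 K (sig3 K k)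

/-- The element `c = [x_1, x_2]` of `R′` (in `R′` one has
`[x_1,x_2] = [x_2,x_3] = [x_3,x_1]`, and `c` denotes this common value). -/
noncomputable def c3 (K : Type*) [Field K] : R3 K :=
  X3 K 0 * X3 K 1 - X3 K 1 * X3 K 0

/-- The generator of the group `G` of circular permutations, acting as the
`K`-algebra automorphism of `P` sending `x_i` to `x_{i+1}` (mod `3`). -/
noncomputable def rot3 (K : Type*) [Field K] : P3 K →ₐ[K] P3 K :=
  FreeAlgebra.lift K fun i => FreeAlgebra.ι K (finRotate 3 i)

section Core

variable {L A : Type*} [Field L] [Ring A] [Algebra L A]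

/-- Generators of the commutative subalgebra. -/
def gens3 (s u v c : A) : Set A := {s, c, v * u, u * (u * u), v * (v * v)}

lemma core_uv (w l : L) (hw : w ^ 2 + w + 1 = 0) (h3 : (3 : L) ≠ 0)
    (s u v c : A) (hsu : u * s = s * u) (hsv : v * s = s * v) (hsc : c * s = s * c)
    (huc : u * c = (w ^ 2) • (c * u)) (hvc : v * c = w • (c * v))
    (huv : u * v = v * u + l • c)
    (x y z : A) (hx : (3 : L) • x = s + u + v) (hy : (3 : L) • y = s + (w ^ 2) • u + w • v)
    (hz : (3 : L) • z = s + w • u + (w ^ 2) • v)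
    (hgen : Algebra.adjoin L ({x, y, z} : Set A) = ⊤)
    (g : A →ₐ[L] A) (gs : g s = s) (gc : g c = c) (gu : g u = (w ^ 2) • u) (gv : g v = w • v)
    (p q : A) (hp : g p = p) (hq : g q = q) : p * q = q * p := by
  have hw3 : w ^ 3 = 1 := by linear_combination (w - 1) * hw
  have hsu' : ∀ t, u * (s * t) = s * (u * t) := fun t => by
    rw [← mul_assoc, hsu, mul_assoc]
  have hsv' : ∀ t, v * (s * t) = s * (v * t) := fun t => by
    rw [← mul_assoc, hsv, mul_assoc]
  have hsc' : ∀ t, c * (s * t) = s * (c * t) := fun t => by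
    rw [← mul_assoc, hsc, mul_assoc]
  have huc' : ∀ t, u * (c * t) = (w ^ 2) • (c * (u * t)) := fun t => by
    rw [← mul_assoc, huc, smul_mul_assoc, mul_assoc]
  have hvc' : ∀ t, v * (c * t) = w • (c * (v * t)) := fun t => by
    rw [← mul_assoc, hvc, smul_mul_assoc, mul_assoc]
  have huv' : ∀ t, u * (v * t) = v * (u * t) + l • (c * t) := fun t => by
    rw [← mul_assoc, huv, add_mul, smul_mul_assoc, mul_assoc]
  have hcomm : ∀ a ∈ gens3 s u v c, ∀ b ∈ gens3 s u v c, a * b = b * a := by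
    have e1 : c * (v * u) = v * u * c := by
      simp only [mul_assoc, huc, hvc', mul_smul_comm, smul_smul]
      match_scalars; linear_combination -hw3
    have e2 : c * (u * (u * u)) = u * (u * u) * c := by
      simp only [mul_assoc, huc, huc', mul_smul_comm, smul_smul]
      match_scalars; linear_combination -(w ^ 3 + 1) * hw3
    have e3 : c * (v * (v * v)) = v * (v * v) * c := by
      simp only [mul_assoc, hvc, hvc', mul_smul_comm, smul_smul]
      match_scalars; linear_combination -hw3
    have e4 : v * (u * (u * u)) = u * (u * u) * v := by
      simp only [mul_assoc, huv, huv', huc, huc', mul_add, add_mul, smul_add, mul_smul_comm, smul_smul]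
      match_scalars
      · ring
      · linear_combination (-l * (w ^ 2 - w + 1)) * hw
    have e5 : u * (v * (v * v)) = v * (v * v) * u := by
      simp only [mul_assoc, huv, huv', hvc, hvc', mul_add, add_mul, smul_add, mul_smul_comm, smul_smul]
      match_scalars
      · ring
      · linear_combination l * hw
    have cs : ∀ b ∈ gens3 s u v c, s * b = b * s := by
      rintro b (rfl | rfl | rfl | rfl | rfl) <;>
        simp only [mul_assoc, hsu, hsv, hsc, hsu', hsv', hsc']
    have cu : ∀ b ∈ gens3 s u v c, c * b = b * c := by
      rintro b (rfl | rfl | rfl | rfl | rfl)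
      exacts [hsc, rfl, e1, e2, e3]
    have U1 : Commute (u * (u * u)) v := e4.symm
    have U2 : Commute (u * (u * u)) u := by
      show _ = _
      simp only [mul_assoc]
    have V1 : Commute (v * (v * v)) u := e5.symm
    have V2 : Commute (v * (v * v)) v := by
      show _ = _
      simp only [mul_assoc]
    have T1 : Commute (u * (u * u)) (v * u) := U1.mul_right U2
    have T2 : Commute (v * (v * v)) (v * u) := V2.mul_right V1
    have T3 : Commute (u * (u * u)) (v * (v * v)) := U1.mul_right (U1.mul_right U1)
    intro a ha b hb
    rcases ha with rfl | rfl | rfl | rfl | rfl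
    · exact cs b hb
    · exact cu b hb
    · rcases hb with rfl | rfl | rfl | rfl | rfl
      exacts [(cs _ (by simp [gens3])).symm, e1.symm, rfl, T1.symm, T2.symm]
    · rcases hb with rfl | rfl | rfl | rfl | rfl
      exacts [(cs _ (by simp [gens3])).symm, e2.symm, T1, rfl, T3]
    · rcases hb with rfl | rfl | rfl | rfl | rfl
      exacts [(cs _ (by simp [gens3])).symm, e3.symm, T2, T3.symm, rfl]
  set B := Algebra.adjoin L (gens3 s u v c) with hB
  have sB : s ∈ B := Algebra.subset_adjoin (by simp [gens3])
  have cB : c ∈ B := Algebra.subset_adjoin (by simp [gens3])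
  have tB : v * u ∈ B := Algebra.subset_adjoin (by simp [gens3])
  have uB : u * (u * u) ∈ B := Algebra.subset_adjoin (by simp [gens3])
  have vB : v * (v * v) ∈ B := Algebra.subset_adjoin (by simp [gens3])
  have hBcomm : ∀ a ∈ B, ∀ b ∈ B, a * b = b * a := by
    intro a ha b hb
    letI := Algebra.adjoinCommRingOfComm L hcomm
    exact congrArg Subtype.val (mul_comm (⟨a, ha⟩ : Algebra.adjoin L (gens3 s u v c)) ⟨b, hb⟩)
  have hgB : ∀ a ∈ B, g a = a := by
    intro a ha
    have : Set.EqOn g (AlgHom.id L A) (gens3 s u v c) := by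
      rintro b (rfl | rfl | rfl | rfl | rfl)
      · simpa using gs
      · simpa using gc
      · simp only [map_mul, gu, gv, smul_mul_assoc, mul_smul_comm, smul_smul, AlgHom.id_apply]
        match_scalars; linear_combination hw3
      · simp only [map_mul, gu, gv, smul_mul_assoc, mul_smul_comm, smul_smul, AlgHom.id_apply]
        match_scalars; linear_combination (w ^ 3 + 1) * hw3
      · simp only [map_mul, gu, gv, smul_mul_assoc, mul_smul_comm, smul_smul, AlgHom.id_apply]
        match_scalars; linear_combination hw3
    exact (AlgHom.eqOn_adjoin_iff.2 this) ha
  let W : A → Prop := fun m => ∃ b1 ∈ B, ∃ b2 ∈ B, ∃ b3 ∈ B, ∃ b4 ∈ B, ∃ b5 ∈ B,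
    m = b1 + b2 * u + b3 * (v * v) + b4 * (u * u) + b5 * v
  have Wadd : ∀ m n, W m → W n → W (m + n) := by
    rintro m n ⟨b1, h1, b2, h2, b3, h3, b4, h4, b5, h5, rfl⟩
      ⟨a1, k1, a2, k2, a3, k3, a4, k4, a5, k5, rfl⟩
    refine ⟨_, add_mem h1 k1, _, add_mem h2 k2, _, add_mem h3 k3, _, add_mem h4 k4, _,
      add_mem h5 k5, ?_⟩
    simp only [add_mul]; abel
  have Wsmul : ∀ (r : L) m, W m → W (r • m) := by
    rintro r m ⟨b1, h1, b2, h2, b3, h3, b4, h4, b5, h5, rfl⟩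
    refine ⟨_, B.smul_mem h1 r, _, B.smul_mem h2 r, _, B.smul_mem h3 r, _, B.smul_mem h4 r, _,
      B.smul_mem h5 r, ?_⟩
    simp only [smul_add, smul_mul_assoc]
  have Ws : ∀ m, W m → W (m * s) := by
    rintro m ⟨b1, h1, b2, h2, b3, h3, b4, h4, b5, h5, rfl⟩
    refine ⟨_, mul_mem h1 sB, _, mul_mem h2 sB, _, mul_mem h3 sB, _, mul_mem h4 sB, _,
      mul_mem h5 sB, ?_⟩
    simp only [add_mul, mul_assoc, hsu, hsv, hsu', hsv']
  have Wu : ∀ m, W m → W (m * u) := by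
    rintro m ⟨b1, h1, b2, h2, b3, h3, b4, h4, b5, h5, rfl⟩
    refine ⟨b4 * (u * (u * u)) + b5 * (v * u), add_mem (mul_mem h4 uB) (mul_mem h5 tB),
      b1, h1, 0, zero_mem _, b2, h2,
      b3 * (v * u - (l * w) • c), mul_mem h3 (sub_mem tB (B.smul_mem cB _)), ?_⟩
    simp only [add_mul, mul_sub, sub_mul, mul_assoc, huv, mul_add, hvc, mul_smul_comm,
      smul_mul_assoc, smul_smul, zero_mul]
    module
  have Wv : ∀ m, W m → W (m * v) := by
    rintro m ⟨b1, h1, b2, h2, b3, h3, b4, h4, b5, h5, rfl⟩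
    refine ⟨b2 * (v * u + l • c) + b3 * (v * (v * v)),
      add_mem (mul_mem h2 (add_mem tB (B.smul_mem cB _))) (mul_mem h3 vB),
      b4 * (v * u + (l + l * w ^ 2) • c), mul_mem h4 (add_mem tB (B.smul_mem cB _)),
      b5, h5, 0, zero_mem _, b1, h1, ?_⟩
    simp only [add_mul, mul_assoc, huv, huv', huc, mul_add, mul_smul_comm,
      smul_mul_assoc, smul_smul, zero_mul]
    module
  have inv3 : ∀ a b : A, (3 : L) • a = b → a = (3 : L)⁻¹ • b := fun a b h => by
    rw [← h, smul_smul, inv_mul_cancel₀ h3, one_smul]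
  have Wall : ∀ a : A, ∀ m, W m → W (m * a) := by
    intro a
    have ha : a ∈ Algebra.adjoin L ({x, y, z} : Set A) := by rw [hgen]; trivial
    induction ha using Algebra.adjoin_induction with
    | mem a ha =>
      intro m hm
      rcases ha with rfl | rfl | rfl
      · rw [inv3 _ _ hx, mul_smul_comm, mul_add, mul_add]
        exact Wsmul _ _ (Wadd _ _ (Wadd _ _ (Ws _ hm) (Wu _ hm)) (Wv _ hm))
      · rw [inv3 _ _ hy, mul_smul_comm, mul_add, mul_add, mul_smul_comm, mul_smul_comm]
        exact Wsmul _ _ (Wadd _ _ (Wadd _ _ (Ws _ hm) (Wsmul _ _ (Wu _ hm))) (Wsmul _ _ (Wv _ hm)))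
      · rw [inv3 _ _ hz, mul_smul_comm, mul_add, mul_add, mul_smul_comm, mul_smul_comm]
        exact Wsmul _ _ (Wadd _ _ (Wadd _ _ (Ws _ hm) (Wsmul _ _ (Wu _ hm))) (Wsmul _ _ (Wv _ hm)))
    | algebraMap r =>
      intro m hm
      rw [← Algebra.commutes, ← Algebra.smul_def]
      exact Wsmul _ _ hm
    | add a b _ _ iha ihb =>
      intro m hm
      rw [mul_add]
      exact Wadd _ _ (iha _ hm) (ihb _ hm)
    | mul a b _ _ iha ihb =>
      intro m hm
      rw [← mul_assoc]
      exact ihb _ (iha _ hm)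
  have W1 : W 1 := ⟨1, one_mem _, 0, zero_mem _, 0, zero_mem _, 0, zero_mem _, 0, zero_mem _,
    by simp⟩
  have key : ∀ a : A, g a = a → a ∈ B := by
    intro a ha
    obtain ⟨b1, h1, b2, h2, b3, h3', b4, h4, b5, h5, e⟩ := by simpa using Wall a 1 W1
    have e1 : a = b1 + w ^ 2 • (b2 * u) + w ^ 2 • (b3 * (v * v)) + w ^ 4 • (b4 * (u * u))
        + w • (b5 * v) := by
      have := congrArg g e
      rw [ha] at this
      rw [this]
      simp only [map_add, map_mul, hgB _ h1, hgB _ h2, hgB _ h3', hgB _ h4, hgB _ h5, gu, gv,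
        smul_mul_assoc, mul_smul_comm, smul_smul]
      module
    have e2 : a = b1 + w ^ 4 • (b2 * u) + w ^ 4 • (b3 * (v * v)) + w ^ 8 • (b4 * (u * u))
        + w ^ 2 • (b5 * v) := by
      have := congrArg g e1
      rw [ha] at this
      rw [this]
      simp only [map_add, map_mul, map_smul, hgB _ h1, hgB _ h2, hgB _ h3', hgB _ h4, hgB _ h5,
        gu, gv, smul_mul_assoc, mul_smul_comm, smul_smul]
      module
    have e3 : (3 : L) • a = (3 : L) • b1 := by
      have : (3 : L) • a = a + a + a := by module
      rw [this]
      nth_rewrite 1 [e]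
      nth_rewrite 1 [e1]
      rw [e2]
      match_scalars
      · ring
      · linear_combination (w ^ 2 - w + 1) * hw
      · linear_combination (w ^ 2 - w + 1) * hw
      · linear_combination (w ^ 2 - w + 1) * (w ^ 4 - w ^ 2 + 1) * hw
      · linear_combination hw
    rw [inv3 _ _ e3, smul_smul, inv_mul_cancel₀ h3, one_smul]
    exact h1
  exact hBcomm _ (key p hp) _ (key q hq)

/-- Consequences of centrality of `σ₁`, `σ₂`. -/
lemma rels3 {A : Type*} [Ring A] (x y z : A)
    (h1x : x * (x + y + z) = (x + y + z) * x) (h1y : y * (x + y + z) = (x + y + z) * y)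
    (h2x : x * (x * y + x * z + y * z) = (x * y + x * z + y * z) * x)
    (h2y : y * (x * y + x * z + y * z) = (x * y + x * z + y * z) * y) :
    x * y - y * x = y * z - z * y ∧ x * y - y * x = z * x - x * z ∧
    (x * y - y * x) * z = y * (x * y - y * x) ∧ (x * y - y * x) * x = z * (x * y - y * x) ∧
    (x * y - y * x) * y = x * (x * y - y * x) := by
  have hA : z * x = x * y - y * x + x * z := by
    rw [← sub_eq_zero] at h1x ⊢
    rw [← neg_eq_zero, ← h1x]; noncomm_ring
  have hB : z * y = y * z - (x * y - y * x) := by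
    rw [← sub_eq_zero] at h1y ⊢
    rw [← neg_eq_zero, ← h1y]; noncomm_ring
  have hA' : ∀ t, z * (x * t) = x * (y * t) - y * (x * t) + x * (z * t) := fun t => by
    rw [← mul_assoc, hA]; noncomm_ring
  have hB' : ∀ t, z * (y * t) = y * (z * t) - (x * (y * t) - y * (x * t)) := fun t => by
    rw [← mul_assoc, hB]; noncomm_ring
  simp only [mul_add, add_mul, mul_assoc, hA, hB, mul_sub] at h2x h2y
  rw [← sub_eq_zero] at h2x h2y
  have Z : (x * y - y * x) * z = y * (x * y - y * x) := by
    rw [← sub_eq_zero, ← h2x]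
    simp only [mul_sub, sub_mul, mul_assoc, hA, hB, hA', hB', mul_add]
    abel
  have X : (x * y - y * x) * x = z * (x * y - y * x) := by
    rw [← sub_eq_zero, ← h2y]
    simp only [mul_sub, sub_mul, mul_assoc, hA, hB, hA', hB', mul_add]
    abel
  refine ⟨by rw [hB]; abel, by rw [hA]; abel, Z, X, ?_⟩
  have hc : (x * y - y * x) * (x + y + z) = (x + y + z) * (x * y - y * x) := by
    have a1 : Commute x (x + y + z) := h1x
    have a2 : Commute y (x + y + z) := h1y
    exact ((a1.mul_left a2).sub_left (a2.mul_left a1))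
  rw [mul_add, mul_add, Z, X, add_mul, add_mul] at hc
  have : (x * y - y * x) * y - x * (x * y - y * x) = 0 := by
    rw [← sub_eq_zero] at hc
    rw [← hc]; abel
  exact sub_eq_zero.1 this

lemma core_xyz (w : L) (hw : w ^ 2 + w + 1 = 0) (h3 : (3 : L) ≠ 0) (x y z : A)
    (h1x : x * (x + y + z) = (x + y + z) * x) (h1y : y * (x + y + z) = (x + y + z) * y)
    (h2x : x * (x * y + x * z + y * z) = (x * y + x * z + y * z) * x)
    (h2y : y * (x * y + x * z + y * z) = (x * y + x * z + y * z) * y)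
    (hgen : Algebra.adjoin L ({x, y, z} : Set A) = ⊤)
    (g : A →ₐ[L] A) (gx : g x = y) (gy : g y = z) (gz : g z = x)
    (p q : A) (hp : g p = p) (hq : g q = q) : p * q = q * p := by
  obtain ⟨r1, r2, rz, rx, ry⟩ := rels3 x y z h1x h1y h2x h2y
  have hw3 : w ^ 3 = 1 := by linear_combination (w - 1) * hw
  have h1z : z * (x + y + z) = (x + y + z) * z := by
    have a1 : Commute x (x + y + z) := h1x
    have a2 : Commute y (x + y + z) := h1y
    have : Commute ((x + y + z) - x - y) (x + y + z) :=
      ((Commute.refl _).sub_left a1).sub_left a2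
    have e : (x + y + z) - x - y = z := by abel
    rw [e] at this
    exact this
  have Cx : Commute x (x + y + z) := h1x
  have Cy : Commute y (x + y + z) := h1y
  have Cz : Commute z (x + y + z) := h1z
  refine core_uv w (3 * (w ^ 2 - w)) hw h3 (x + y + z) (x + w • y + w ^ 2 • z)
    (x + w ^ 2 • y + w • z) (x * y - y * x)
    ((Cx.add_left (Cy.smul_left _)).add_left (Cz.smul_left _))
    ((Cx.add_left (Cy.smul_left _)).add_left (Cz.smul_left _))
    ((Cx.mul_left Cy).sub_left (Cy.mul_left Cx)) ?_ ?_ ?_ x y z ?_ ?_ ?_ hgen g ?_ ?_ ?_ ?_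
    p q hp hq
  · rw [mul_add, mul_add, mul_smul_comm, mul_smul_comm, rx, ry, rz, add_mul, add_mul,
      smul_mul_assoc, smul_mul_assoc]
    generalize x * y - y * x = c
    match_scalars
    · linear_combination -hw3
    · linear_combination -w * hw3
    · ring
  · rw [mul_add, mul_add, mul_smul_comm, mul_smul_comm, rx, ry, rz, add_mul, add_mul,
      smul_mul_assoc, smul_mul_assoc]
    generalize x * y - y * x = c
    match_scalars
    · linear_combination -hw3
    · ring
    · ring
  · have e1 : z * y = y * z - (x * y - y * x) := by rw [r1]; abel
    have e2 : z * x = (x * y - y * x) + x * z := by rw [r2]; abel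
    simp only [mul_add, add_mul, smul_mul_assoc, mul_smul_comm, smul_smul, smul_add, e1, e2]
    match_scalars
    all_goals first | ring1 | linear_combination w * hw3 | linear_combination -w * hw3 | linear_combination (w ^ 2 - w) * hw | linear_combination -(w ^ 2 - w) * hw
  · match_scalars
    all_goals first | ring1 | linear_combination w * hw3 | linear_combination -w * hw3 | linear_combination -hw
  · match_scalars
    all_goals first | ring1 | linear_combination w * hw3 | linear_combination -w * hw3 | linear_combination -hw | linear_combination -2 * hw3 | linear_combination -(w ^ 2 - w + 1) * hw
  · match_scalars
    all_goals first | ring1 | linear_combination w * hw3 | linear_combination -w * hw3 | linear_combination -hw | linear_combination -2 * hw3 | linear_combination -(w ^ 2 - w + 1) * hw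
  · simp only [map_add, gx, gy, gz]; abel
  · simp only [map_sub, map_mul, gx, gy]; exact r1.symm
  · simp only [map_add, map_smul, gx, gy, gz]
    match_scalars
    all_goals first | ring1 | linear_combination w * hw3 | linear_combination -w * hw3 | linear_combination -hw3 | linear_combination -w * hw3
  · simp only [map_add, map_smul, gx, gy, gz]
    match_scalars
    all_goals first | ring1 | linear_combination w * hw3 | linear_combination -w * hw3 | linear_combination -hw3 | linear_combination -w * hw3

end Core

lemma X3_comm (K : Type*) [Field K] (i k : Fin 3) : X3 K i * S3 K k = S3 K k * X3 K i := by
  have := RingQuot.mkAlgHom_rel K (s := rel3 K) (x := x3 K i * sig3 K k)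
    (y := sig3 K k * x3 K i) ⟨i, k, rfl, rfl⟩
  rw [map_mul, map_mul] at this
  exact this

lemma S3_0 (K : Type*) [Field K] : S3 K 0 = X3 K 0 + X3 K 1 + X3 K 2 := by
  simp [S3, X3, sig3]

lemma S3_1 (K : Type*) [Field K] :
    S3 K 1 = X3 K 0 * X3 K 1 + X3 K 0 * X3 K 2 + X3 K 1 * X3 K 2 := by
  simp [S3, X3, sig3]

lemma S3_2 (K : Type*) [Field K] : S3 K 2 = X3 K 0 * X3 K 1 * X3 K 2 := by
  simp [S3, X3, sig3]

lemma rot_x3 (K : Type*) [Field K] (i : Fin 3) : rot3 K (x3 K i) = x3 K (finRotate 3 i) := by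
  simp [rot3, x3]

lemma rot_sig (K : Type*) [Field K] (k : Fin 3) : mk3 K (rot3 K (sig3 K k)) = S3 K k := by
  have hX : ∀ i, mk3 K (x3 K i) = X3 K i := fun i => rfl
  have r0 : finRotate 3 0 = 1 := by decide
  have r1 : finRotate 3 1 = 2 := by decide
  have r2 : finRotate 3 2 = 0 := by decide
  obtain ⟨q1, q2, qz, qx, qy⟩ := rels3 (X3 K 0) (X3 K 1) (X3 K 2)
    (by simpa only [S3_0] using X3_comm K 0 0) (by simpa only [S3_0] using X3_comm K 1 0)
    (by simpa only [S3_1] using X3_comm K 0 1) (by simpa only [S3_1] using X3_comm K 1 1)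
  have e2 : X3 K 2 * X3 K 0 = X3 K 0 * X3 K 1 - X3 K 1 * X3 K 0 + X3 K 0 * X3 K 2 := by
    rw [q2]; abel
  fin_cases k
  · show mk3 K (rot3 K (sig3 K 0)) = S3 K 0
    rw [S3_0]
    simp only [sig3, Matrix.cons_val, map_add, rot_x3, r0, r1, r2]
    simp only [hX]; abel
  · show mk3 K (rot3 K (sig3 K 1)) = S3 K 1
    rw [S3_1]
    simp only [sig3, Matrix.cons_val, map_add, map_mul, rot_x3, r0, r1, r2]
    simp only [hX, e2]; abel
  · show mk3 K (rot3 K (sig3 K 2)) = S3 K 2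
    rw [S3_2]
    simp only [sig3, Matrix.cons_val, map_add, map_mul, rot_x3, r0, r1, r2]
    simp only [hX]
    rw [mul_assoc, e2, mul_add, ← qz, sub_mul, ← mul_assoc, sub_add_cancel]

/-- The descended rotation. -/
noncomputable def gR (K : Type*) [Field K] : R3 K →ₐ[K] R3 K :=
  RingQuot.liftAlgHom K ⟨(mk3 K).comp (rot3 K), by
    rintro a b ⟨i, k, rfl, rfl⟩
    simp only [AlgHom.comp_apply, map_mul, rot_sig, rot_x3]
    exact X3_comm K _ k⟩

lemma gR_mk (K : Type*) [Field K] (r : P3 K) : gR K (mk3 K r) = mk3 K (rot3 K r) := by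
  simp [gR, mk3]

lemma R3_gen (K : Type*) [Field K] :
    Algebra.adjoin K ({X3 K 0, X3 K 1, X3 K 2} : Set (R3 K)) = ⊤ := by
  have h : ({X3 K 0, X3 K 1, X3 K 2} : Set (R3 K)) =
      mk3 K '' Set.range (FreeAlgebra.ι K : Fin 3 → P3 K) := by
    ext a
    simp [X3, x3, Fin.exists_fin_succ, eq_comm]
  rw [h, ← AlgHom.map_adjoin, FreeAlgebra.adjoin_range_ι, Algebra.map_top, AlgHom.range_eq_top]
  exact RingQuot.mkAlgHom_surjective K _

/-- The set of `G`-invariant elements of `R′` (case `n = 3`) is a commutative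
subring: any two elements of `R′` fixed by (the descended action of) `G`
commute with each other. -/
theorem invariants_commute (K : Type*) [Field K] [CharZero K]
    (p q : R3 K)
    (hp : ∀ (m : ℕ) (r : P3 K), mk3 K r = p → mk3 K ((⇑(rot3 K))^[m] r) = p)
    (hq : ∀ (m : ℕ) (r : P3 K), mk3 K r = q → mk3 K ((⇑(rot3 K))^[m] r) = q) :
    p * q = q * p := by
  have inv : ∀ p : R3 K, (∀ (m : ℕ) (r : P3 K), mk3 K r = p →
      mk3 K ((⇑(rot3 K))^[m] r) = p) → gR K p = p := by
    intro p hp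
    obtain ⟨r, rfl⟩ := RingQuot.mkAlgHom_surjective K (rel3 K) p
    have := hp 1 r rfl
    exact (gR_mk K r).trans this
  have gp := inv p hp
  have gq := inv q hq
  let L := AlgebraicClosure K
  obtain ⟨w, hw⟩ : ∃ w : L, w ^ 2 + w + 1 = 0 := by
    obtain ⟨w, hw⟩ := IsAlgClosed.exists_root
      (Polynomial.X ^ 2 + Polynomial.X + 1 : Polynomial L) (by
        have : (Polynomial.X ^ 2 + Polynomial.X + 1 : Polynomial L).degree = 2 := by
          compute_degree!
        rw [this]; decide)
    exact ⟨w, by simpa [Polynomial.IsRoot] using hw⟩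
  have : CharZero L := charZero_of_injective_algebraMap (algebraMap K L).injective
  have h3 : (3 : L) ≠ 0 := by norm_num
  let f : R3 K →ₐ[K] TensorProduct K L (R3 K) := Algebra.TensorProduct.includeRight
  have hf : Function.Injective f :=
    Algebra.TensorProduct.includeRight_injective (algebraMap K L).injective
  let g : TensorProduct K L (R3 K) →ₐ[L] TensorProduct K L (R3 K) := Algebra.TensorProduct.map (AlgHom.id L L) (gR K)
  have hg : ∀ a, g (f a) = f (gR K a) := fun a => by simp [g, f]
  have r0 : finRotate 3 0 = 1 := by decide
  have r1 : finRotate 3 1 = 2 := by decide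
  have r2 : finRotate 3 2 = 0 := by decide
  have gX : ∀ i, gR K (X3 K i) = X3 K (finRotate 3 i) := fun i => by
    rw [X3, gR_mk, rot_x3, X3]
  have hfc : ∀ i k, f (X3 K i) * f (S3 K k) = f (S3 K k) * f (X3 K i) := fun i k => by
    rw [← map_mul, X3_comm, map_mul]
  have f0 : f (S3 K 0) = f (X3 K 0) + f (X3 K 1) + f (X3 K 2) := by
    rw [S3_0]; simp only [map_add]
  have f1 : f (S3 K 1) = f (X3 K 0) * f (X3 K 1) + f (X3 K 0) * f (X3 K 2)
      + f (X3 K 1) * f (X3 K 2) := by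
    rw [S3_1]; simp only [map_add, map_mul]
  apply hf
  rw [map_mul, map_mul]
  refine core_xyz w hw h3 (f (X3 K 0)) (f (X3 K 1)) (f (X3 K 2))
    (by simpa only [f0] using hfc 0 0) (by simpa only [f0] using hfc 1 0)
    (by simpa only [f1] using hfc 0 1) (by simpa only [f1] using hfc 1 1)
    ?_ g (by rw [hg, gX, r0]) (by rw [hg, gX, r1]) (by rw [hg, gX, r2]) _ _
    (by rw [hg, gp]) (by rw [hg, gq])
  have := Algebra.TensorProduct.adjoin_one_tmul_image_eq_top (A := L) _ (R3_gen K)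
  rw [← this]
  congr 1
  ext a
  simp [f, eq_comm]
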